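/- In ℂ², define the three closed curves C₁ = {(e^{4πit}, e^{2πit}) : t ∈ [0,1]}, C₂ = {(e^{6πis}, e^{−4πis}) : s ∈ [0,1]}, and C₃ = {(e^{2πiθ}, e^{−6πiθ}) : θ ∈ [0,1]}, all lying on the torus {(z₁, z₂) ∈ ℂ² : |z₁| = 1, |z₂| = 1}. Then C₁ ∩ C₂ = C₂ ∩ C₃ = C₁ ∩ C₃ = {u_k : 0 ≤ k ≤ 6}, where u_k = (e^{4πik/7}, e^{2πik/7}). -/

import Mathlib

open Real

/-- The curve `C₁ = {(e^{4πit}, e^{2πit}) : t ∈ [0,1]}` on the torus `|z₁| = |z₂| = 1`. -/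
noncomputable def curveC₁ : Set (ℂ × ℂ) :=
  {p | ∃ t ∈ Set.Icc (0 : ℝ) 1,
    p = (Complex.exp ((4 * π * t : ℝ) * Complex.I), Complex.exp ((2 * π * t : ℝ) * Complex.I))}

/-- The curve `C₂ = {(e^{6πis}, e^{−4πis}) : s ∈ [0,1]}` on the torus `|z₁| = |z₂| = 1`. -/
noncomputable def curveC₂ : Set (ℂ × ℂ) :=
  {p | ∃ s ∈ Set.Icc (0 : ℝ) 1,
    p = (Complex.exp ((6 * π * s : ℝ) * Complex.I), Complex.exp ((-4 * π * s : ℝ) * Complex.I))}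

/-- The curve `C₃ = {(e^{2πiθ}, e^{−6πiθ}) : θ ∈ [0,1]}` on the torus `|z₁| = |z₂| = 1`. -/
noncomputable def curveC₃ : Set (ℂ × ℂ) :=
  {p | ∃ θ ∈ Set.Icc (0 : ℝ) 1,
    p = (Complex.exp ((2 * π * θ : ℝ) * Complex.I), Complex.exp ((-6 * π * θ : ℝ) * Complex.I))}

/-- The seven points `u_k = (e^{4πik/7}, e^{2πik/7})`, `0 ≤ k ≤ 6`. -/
noncomputable def uPoint (k : ℕ) : ℂ × ℂ :=
  (Complex.exp ((4 * π * k / 7 : ℝ) * Complex.I), Complex.exp ((2 * π * k / 7 : ℝ) * Complex.I))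

/-! For coprime `c` and `d`, the curve `{(zᶜ, zᵈ)}` has the implicit equation `xᵈ = yᶜ`, so
`(zᵃ, zᵇ)` lies on it exactly when `z` is a root of unity with `z ^ (bc - ad) = 1`. For any two of
the exponent pairs `(2, 1)`, `(3, -2)`, `(1, -3)` this determinant is `7`. As
`(3, -2) ≡ 5 • (2, 1)` modulo `7` with `5` invertible, the seventh roots of unity have the same
image under `z ↦ (z³, z⁻²)` as under `z ↦ (z², z)`. -/

section MonomialHom

variable {G : Type*} [CommGroup G]

/-- The homomorphism `z ↦ (zᵃ, zᵇ)`. For `G = Circle` its range is the closed curve on the torus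
with winding numbers `a` and `b`. -/
def monomialHom (G : Type*) [CommGroup G] (a b : ℤ) : G →* G × G :=
  (zpowGroupHom a).prod (zpowGroupHom b)

lemma monomialHom_apply (a b : ℤ) (z : G) : monomialHom G a b z = (z ^ a, z ^ b) := rfl

lemma mem_range_monomialHom_iff {a b : ℤ} (hab : IsCoprime a b) (p : G × G) :
    p ∈ (monomialHom G a b).range ↔ p.1 ^ b = p.2 ^ a := by
  constructor
  · rintro ⟨z, rfl⟩
    simp only [monomialHom_apply, ← zpow_mul, mul_comm]
  · intro h
    obtain ⟨u, v, huv⟩ := hab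
    refine ⟨p.1 ^ u * p.2 ^ v, Prod.ext ?_ ?_⟩
    · calc (p.1 ^ u * p.2 ^ v) ^ a
          = p.1 ^ (u * a) * (p.2 ^ a) ^ v := by
            rw [mul_zpow, ← zpow_mul, zpow_comm p.2]
        _ = p.1 ^ (u * a + v * b) := by rw [← h, ← zpow_mul, ← zpow_add, mul_comm b]
        _ = p.1 := by rw [huv, zpow_one]
    · calc (p.1 ^ u * p.2 ^ v) ^ b
          = (p.1 ^ b) ^ u * p.2 ^ (v * b) := by
            rw [mul_zpow, ← zpow_mul p.2, zpow_comm p.1]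
        _ = p.2 ^ (u * a + v * b) := by rw [h, ← zpow_mul, ← zpow_add, mul_comm a]
        _ = p.2 := by rw [huv, zpow_one]

lemma range_monomialHom_inf_range {c d : ℤ} (hcd : IsCoprime c d) (a b : ℤ) :
    (monomialHom G a b).range ⊓ (monomialHom G c d).range =
      (zpowGroupHom (b * c - a * d)).ker.map (monomialHom G a b) := by
  have meet_iff (z : G) :
      monomialHom G a b z ∈ (monomialHom G c d).range ↔ z ^ (b * c - a * d) = 1 := by
    rw [mem_range_monomialHom_iff hcd, zpow_sub, mul_inv_eq_one, eq_comm]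
    simp only [monomialHom_apply, zpow_mul]
  ext p
  constructor
  · rintro ⟨⟨z, rfl⟩, hz⟩
    exact ⟨z, (meet_iff z).1 hz, rfl⟩
  · rintro ⟨z, hz, rfl⟩
    exact ⟨⟨z, rfl⟩, (meet_iff z).2 hz⟩

lemma map_monomialHom_ker_zpow_le {a b a' b' k n : ℤ}
    (ha : a' ≡ k * a [ZMOD n]) (hb : b' ≡ k * b [ZMOD n]) :
    (zpowGroupHom n).ker.map (monomialHom G a' b') ≤
      (zpowGroupHom n).ker.map (monomialHom G a b) := by
  rintro _ ⟨z, hz : z ^ n = 1, rfl⟩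
  have zpow_eq {i j : ℤ} (hij : i ≡ j [ZMOD n]) : z ^ i = z ^ j :=
    zpow_eq_zpow_iff_modEq.2 (hij.of_dvd (orderOf_dvd_iff_zpow_eq_one.2 hz))
  refine ⟨z ^ k, zpow_mem (show z ∈ (zpowGroupHom n).ker from hz) k, ?_⟩
  simp only [monomialHom_apply, ← zpow_mul, zpow_eq ha, zpow_eq hb]

end MonomialHom

lemma exists_mem_Icc_exp_two_pi_mul_eq (z : Circle) :
    ∃ t ∈ Set.Icc (0 : ℝ) 1, Circle.exp (2 * π * t) = z := by
  have periodic : Function.Periodic (fun t : ℝ ↦ Circle.exp (2 * π * t)) 1 := fun t ↦ by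
    simp only [mul_add, mul_one, Circle.exp_add_two_pi]
  obtain ⟨θ, rfl⟩ := Circle.exp_surjective z
  have hθ : Circle.exp θ ∈ Set.range fun t : ℝ ↦ Circle.exp (2 * π * t) :=
    ⟨θ / (2 * π), congrArg _ (mul_div_cancel₀ θ two_pi_pos.ne')⟩
  rwa [← periodic.image_Icc one_pos 0, zero_add] at hθ

lemma isPrimitiveRoot_circleExp {n : ℕ} (hn : n ≠ 0) :
    IsPrimitiveRoot (Circle.exp (2 * π / n)) n := by
  refine IsPrimitiveRoot.of_map_of_injective (f := Circle.coeHom) ?_ Circle.coe_injective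
  convert Complex.isPrimitiveRoot_exp n hn using 1
  change Complex.exp ((2 * π / n : ℝ) * Complex.I) = _
  push_cast
  ring_nf

lemma circle_pow_eq_one_iff {n : ℕ} (hn : n ≠ 0) (z : Circle) :
    z ^ n = 1 ↔ ∃ k < n, z = Circle.exp (2 * π * k / n) := by
  have exp_eq_pow (k : ℕ) : Circle.exp (2 * π * k / n) = Circle.exp (2 * π / n) ^ k := by
    rw [← Circle.exp_natCast_mul]
    ring_nf
  have hζ := isPrimitiveRoot_circleExp hn
  simp only [exp_eq_pow]
  constructor
  · intro hz
    have : NeZero n := ⟨hn⟩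
    obtain ⟨k, hk, hkz⟩ :=
      (hζ.map_of_injective (f := Circle.coeHom) Circle.coe_injective).eq_pow_of_pow_eq_one
        (show (z : ℂ) ^ n = 1 by rw [← Circle.coe_pow, hz, Circle.coe_one])
    exact ⟨k, hk, Circle.ext hkz.symm⟩
  · rintro ⟨k, -, rfl⟩
    rw [pow_right_comm, hζ.pow_eq_one, one_pow]

/-- The inclusion of the torus `|z₁| = |z₂| = 1` into `ℂ²`. -/
def torusCoe : Circle × Circle → ℂ × ℂ := Prod.map (↑) (↑)

lemma torusCoe_injective : Function.Injective torusCoe :=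
  Circle.coe_injective.prodMap Circle.coe_injective

lemma torusCoe_image_subset (s : Set (Circle × Circle)) :
    torusCoe '' s ⊆ {p : ℂ × ℂ | ‖p.1‖ = 1 ∧ ‖p.2‖ = 1} := by
  rintro _ ⟨p, -, rfl⟩
  exact ⟨p.1.norm_coe, p.2.norm_coe⟩

lemma torusCoe_monomialHom_exp (a b : ℤ) (θ : ℝ) :
    torusCoe (monomialHom Circle a b (Circle.exp θ)) =
      (Complex.exp ((a * θ : ℝ) * Complex.I), Complex.exp ((b * θ : ℝ) * Complex.I)) := by
  rw [monomialHom_apply, ← Circle.exp_intCast_mul, ← Circle.exp_intCast_mul]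
  rfl

lemma torusCoe_image_range_monomialHom (a b : ℤ) :
    torusCoe '' (monomialHom Circle a b).range =
      {p | ∃ t ∈ Set.Icc (0 : ℝ) 1,
        p = (Complex.exp ((2 * a * π * t : ℝ) * Complex.I),
          Complex.exp ((2 * b * π * t : ℝ) * Complex.I))} := by
  have angle_eq (m : ℤ) (t : ℝ) : 2 * m * π * t = m * (2 * π * t) := by ring
  simp only [angle_eq, ← torusCoe_monomialHom_exp]
  ext p
  constructor
  · rintro ⟨_, ⟨z, rfl⟩, rfl⟩
    obtain ⟨t, ht, rfl⟩ := exists_mem_Icc_exp_two_pi_mul_eq z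
    exact ⟨t, ht, rfl⟩
  · rintro ⟨t, -, rfl⟩
    exact ⟨_, ⟨_, rfl⟩, rfl⟩

lemma curveC₁_eq_image : curveC₁ = torusCoe '' (monomialHom Circle 2 1).range := by
  rw [torusCoe_image_range_monomialHom, curveC₁]
  norm_num

lemma curveC₂_eq_image : curveC₂ = torusCoe '' (monomialHom Circle 3 (-2)).range := by
  rw [torusCoe_image_range_monomialHom, curveC₂]
  norm_num

lemma curveC₃_eq_image : curveC₃ = torusCoe '' (monomialHom Circle 1 (-3)).range := by
  rw [torusCoe_image_range_monomialHom, curveC₃]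
  norm_num

lemma uPoint_eq_torusCoe (k : ℕ) :
    uPoint k = torusCoe (monomialHom Circle 2 1 (Circle.exp (2 * π * k / (7 : ℕ)))) := by
  rw [torusCoe_monomialHom_exp, uPoint]
  push_cast
  ring_nf

lemma setOf_uPoint_eq_image :
    {p | ∃ k : ℕ, k ≤ 6 ∧ p = uPoint k} =
      torusCoe '' ((zpowGroupHom 7).ker.map (monomialHom Circle 2 1)) := by
  have mem_ker_iff (z : Circle) :
      z ∈ (zpowGroupHom 7).ker ↔ ∃ k : ℕ, k < 7 ∧ z = Circle.exp (2 * π * k / (7 : ℕ)) :=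
    circle_pow_eq_one_iff (n := 7) (by norm_num) z
  ext p
  constructor
  · rintro ⟨k, hk, rfl⟩
    exact ⟨_, ⟨_, (mem_ker_iff _).2 ⟨k, Nat.lt_succ_of_le hk, rfl⟩, rfl⟩,
      (uPoint_eq_torusCoe k).symm⟩
  · rintro ⟨_, ⟨z, hz, rfl⟩, rfl⟩
    obtain ⟨k, hk, rfl⟩ := (mem_ker_iff z).1 hz
    exact ⟨k, Nat.le_of_lt_succ hk, (uPoint_eq_torusCoe k).symm⟩

/-- The three curves `C₁`, `C₂`, `C₃` all lie on the torus
`{(z₁, z₂) ∈ ℂ² : |z₁| = 1, |z₂| = 1}`, and their pairwise intersections all coincide with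
the seven points `u_k = (e^{4πik/7}, e^{2πik/7})`, `0 ≤ k ≤ 6`. -/
theorem three_curves_intersection :
    (curveC₁ ∪ curveC₂ ∪ curveC₃ ⊆
      {p : ℂ × ℂ | ‖p.1‖ = 1 ∧ ‖p.2‖ = 1}) ∧
    curveC₁ ∩ curveC₂ = {p | ∃ k : ℕ, k ≤ 6 ∧ p = uPoint k} ∧
    curveC₂ ∩ curveC₃ = {p | ∃ k : ℕ, k ≤ 6 ∧ p = uPoint k} ∧
    curveC₁ ∩ curveC₃ = {p | ∃ k : ℕ, k ≤ 6 ∧ p = uPoint k} := by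
  have meet₁₂ : (monomialHom Circle 2 1).range ⊓ (monomialHom Circle 3 (-2)).range =
      (zpowGroupHom 7).ker.map (monomialHom Circle 2 1) :=
    range_monomialHom_inf_range (by norm_num) 2 1
  have meet₂₃ : (monomialHom Circle 3 (-2)).range ⊓ (monomialHom Circle 1 (-3)).range =
      (zpowGroupHom 7).ker.map (monomialHom Circle 3 (-2)) :=
    range_monomialHom_inf_range (by norm_num) 3 (-2)
  have meet₁₃ : (monomialHom Circle 2 1).range ⊓ (monomialHom Circle 1 (-3)).range =
      (zpowGroupHom 7).ker.map (monomialHom Circle 2 1) :=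
    range_monomialHom_inf_range (by norm_num) 2 1
  have reparam : (zpowGroupHom 7).ker.map (monomialHom Circle 3 (-2)) =
      (zpowGroupHom 7).ker.map (monomialHom Circle 2 1) :=
    le_antisymm (map_monomialHom_ker_zpow_le (k := 5) (by decide) (by decide))
      (map_monomialHom_ker_zpow_le (k := 3) (by decide) (by decide))
  rw [curveC₁_eq_image, curveC₂_eq_image, curveC₃_eq_image, setOf_uPoint_eq_image]
  simp only [← Set.image_union, ← Set.image_inter torusCoe_injective, ← Subgroup.coe_inf]
  rw [meet₁₂, meet₂₃, meet₁₃, reparam]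
  exact ⟨torusCoe_image_subset _, rfl, rfl, rfl⟩
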